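/- Let R = Q/𝔤₃ where 𝔤₃ = (xy², xyz, yz², x⁴ − y³z, xz³ − y⁴, x³y − z⁴, x²z²) ⊆ Q. Then the socle (0 :_R 𝔪) of R is equal to the R-submodule generated by the images of x⁴y and x³z, and its dimension as a k-vector space is 2 (that is, R has type 2). -/

import Mathlib

/-!
The ideal `g3` is homogeneous and `R = Q/g3` is Artinian with Hilbert function `1,3,6,7,4,1`. Its
part of degree five is spanned by `x⁴y = y⁴z = xz⁴`, and its part of degree four by `x⁴ = y³z`,
`x³y = z⁴`, `x³z` and `xz³ = y⁴`.

The proof replaces ideal membership by linear conditions on coefficients: `f ∈ g3` if and only if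
the 22 coefficient functionals listed in `Vanish` vanish at `f` (`mem_Ig3_iff`). That elements of
`g3` satisfy these conditions is checked on multiples of the generators. For the converse, a normal
form `normalForm f`, a combination of 22 monomials whose coefficients are those functionals, is
congruent to `f` modulo `g3`. This is proved for all multiples of a standard monomial by descending
induction on its degree, using that every power series is `c + x a + y b + z d` (`exists_decomp`)
and that `x`, `y`, `z` times a standard monomial is again a standard monomial or zero modulo `g3`.

With this description, the conditions `xf, yf, zf ∈ g3` kill all the functionals at `f` but the
coefficient of `x³z` and the one dual to `x⁴y`, so the socle is spanned over `k` by the two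
monomials, and the two remaining functionals show that these are linearly independent.
-/

/-!
STATEMENT 2: For `R = Q/g3`, the socle `(0 :_R m)` of `R` (where `m` is the
maximal ideal of `R`, the image of `(x,y,z)`) equals the `R`-submodule generated by
the images of x^4*y, x^3*z, and its dimension as a `k`-vector space is 2 (so `R` has type 2).

Here `Q = k[[x,y,z]]` is formalized as `MvPowerSeries (Fin 3) k` with
`x = X 0`, `y = X 1`, `z = X 2`.
-/

noncomputable section

/-- The variable `x` in `Q = k[[x,y,z]]`. -/
def xx (k : Type*) [Field k] : MvPowerSeries (Fin 3) k := MvPowerSeries.X 0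
/-- The variable `y` in `Q = k[[x,y,z]]`. -/
def yy (k : Type*) [Field k] : MvPowerSeries (Fin 3) k := MvPowerSeries.X 1
/-- The variable `z` in `Q = k[[x,y,z]]`. -/
def zz (k : Type*) [Field k] : MvPowerSeries (Fin 3) k := MvPowerSeries.X 2

/-- The ideal `g3` of the paper. -/
def Ig3 (k : Type*) [Field k] : Ideal (MvPowerSeries (Fin 3) k) :=
  Ideal.span {xx k * yy k ^ 2, xx k * yy k * zz k, yy k * zz k ^ 2, xx k ^ 4 - yy k ^ 3 * zz k, xx k * zz k ^ 3 - yy k ^ 4, xx k ^ 3 * yy k - zz k ^ 4, xx k ^ 2 * zz k ^ 2}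

/-! ### Coefficients of power series in three variables -/

/-- The exponent `(a, b, c)` of the monomial `x ^ a * y ^ b * z ^ c`. -/
def expo (a b c : ℕ) : Fin 3 →₀ ℕ :=
  Finsupp.single 0 a + Finsupp.single 1 b + Finsupp.single 2 c

/-- The coefficient of `x ^ a * y ^ b * z ^ c`, as a `k`-linear functional on `k[[x,y,z]]`. -/
def cf (k : Type*) [Field k] (a b c : ℕ) : MvPowerSeries (Fin 3) k →ₗ[k] k :=
  MvPowerSeries.coeff (expo a b c)

section

variable {k : Type*} [Field k]

theorem exists_expo (n : Fin 3 →₀ ℕ) : ∃ a b c, n = expo a b c := by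
  refine ⟨n 0, n 1, n 2, ?_⟩
  ext i
  fin_cases i <;> simp [expo]

theorem cf_ext {f g : MvPowerSeries (Fin 3) k} (h : ∀ a b c, cf k a b c f = cf k a b c g) :
    f = g := by
  ext n
  obtain ⟨a, b, c, rfl⟩ := exists_expo n
  exact h a b c

-- The rules for multiplication by a variable let `simp` compute any coefficient of a right-nested
-- product of variables with a power series.
@[simp] theorem cf_x_succ (a b c : ℕ) (f : MvPowerSeries (Fin 3) k) :
    cf k (a + 1) b c (xx k * f) = cf k a b c f := by
  have h : expo (a + 1) b c = Finsupp.single 0 1 + expo a b c := by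
    ext i; fin_cases i <;> simp [expo, add_comm]
  rw [cf, cf, h, xx, MvPowerSeries.X, MvPowerSeries.coeff_add_monomial_mul, one_mul]

@[simp] theorem cf_y_succ (a b c : ℕ) (f : MvPowerSeries (Fin 3) k) :
    cf k a (b + 1) c (yy k * f) = cf k a b c f := by
  have h : expo a (b + 1) c = Finsupp.single 1 1 + expo a b c := by
    ext i; fin_cases i <;> simp [expo, add_comm]
  rw [cf, cf, h, yy, MvPowerSeries.X, MvPowerSeries.coeff_add_monomial_mul, one_mul]

@[simp] theorem cf_z_succ (a b c : ℕ) (f : MvPowerSeries (Fin 3) k) :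
    cf k a b (c + 1) (zz k * f) = cf k a b c f := by
  have h : expo a b (c + 1) = Finsupp.single 2 1 + expo a b c := by
    ext i; fin_cases i <;> simp [expo, add_comm]
  rw [cf, cf, h, zz, MvPowerSeries.X, MvPowerSeries.coeff_add_monomial_mul, one_mul]

@[simp] theorem cf_x_zero (b c : ℕ) (f : MvPowerSeries (Fin 3) k) :
    cf k 0 b c (xx k * f) = 0 := by
  rw [cf, xx, MvPowerSeries.X, MvPowerSeries.coeff_monomial_mul, if_neg]
  intro h
  simpa [expo] using h 0

@[simp] theorem cf_y_zero (a c : ℕ) (f : MvPowerSeries (Fin 3) k) :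
    cf k a 0 c (yy k * f) = 0 := by
  rw [cf, yy, MvPowerSeries.X, MvPowerSeries.coeff_monomial_mul, if_neg]
  intro h
  simpa [expo] using h 1

@[simp] theorem cf_z_zero (a b : ℕ) (f : MvPowerSeries (Fin 3) k) :
    cf k a b 0 (zz k * f) = 0 := by
  rw [cf, zz, MvPowerSeries.X, MvPowerSeries.coeff_monomial_mul, if_neg]
  intro h
  simpa [expo] using h 2

@[simp] theorem cf_one (a b c : ℕ) :
    cf k a b c 1 = if a = 0 ∧ b = 0 ∧ c = 0 then 1 else 0 := by
  classical
  rw [cf, MvPowerSeries.coeff_one]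
  congr 1
  simp [expo, Finsupp.ext_iff, Fin.forall_fin_succ, and_assoc]

/-- Every power series is a constant plus an element of `(x, y, z)`. The multiple of `x` collects
the monomials divisible by `x`, that of `y` those of the rest which are divisible by `y`. -/
theorem exists_decomp (f : MvPowerSeries (Fin 3) k) :
    ∃ (r : k) (a b d : MvPowerSeries (Fin 3) k),
      f = r • 1 + xx k * a + yy k * b + zz k * d := by
  classical
  let A : MvPowerSeries (Fin 3) k := fun n => cf k (n 0 + 1) (n 1) (n 2) f
  let B : MvPowerSeries (Fin 3) k := fun n => if n 0 = 0 then cf k 0 (n 1 + 1) (n 2) f else 0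
  let D : MvPowerSeries (Fin 3) k :=
    fun n => if n 0 = 0 ∧ n 1 = 0 then cf k 0 0 (n 2 + 1) f else 0
  have e0 (a b c) : expo a b c 0 = a := by simp [expo]
  have e1 (a b c) : expo a b c 1 = b := by simp [expo]
  have e2 (a b c) : expo a b c 2 = c := by simp [expo]
  have hA (a b c) : cf k a b c A = cf k (a + 1) b c f := by
    change cf k _ _ _ f = _
    rw [e0, e1, e2]
  have hB (a b c) : cf k a b c B = if a = 0 then cf k 0 (b + 1) c f else 0 := by
    change (if _ then cf k _ _ _ f else 0) = _
    rw [e0, e1, e2]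
  have hD (a b c) : cf k a b c D = if a = 0 ∧ b = 0 then cf k 0 0 (c + 1) f else 0 := by
    change (if _ then cf k _ _ _ f else 0) = _
    rw [e0, e1, e2]
  refine ⟨cf k 0 0 0 f, A, B, D, cf_ext fun a b c => ?_⟩
  rcases a with _ | a <;> rcases b with _ | b <;> rcases c with _ | c <;> simp [hA, hB, hD]

/-! ### The linear conditions cutting out the ideal -/

/-- The 22 linear conditions on coefficients that cut out `g3`: one for each standard monomial,
involving all the monomials congruent to it modulo `g3`. -/
def Vanish (f : MvPowerSeries (Fin 3) k) : Prop :=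
    cf k 4 1 0 f + cf k 0 4 1 f + cf k 1 0 4 f = 0 ∧
    cf k 3 0 1 f = 0 ∧
    cf k 4 0 0 f + cf k 0 3 1 f = 0 ∧
    cf k 3 1 0 f + cf k 0 0 4 f = 0 ∧
    cf k 1 0 3 f + cf k 0 4 0 f = 0 ∧
    cf k 3 0 0 f = 0 ∧
    cf k 2 1 0 f = 0 ∧
    cf k 2 0 1 f = 0 ∧
    cf k 1 0 2 f = 0 ∧
    cf k 0 3 0 f = 0 ∧
    cf k 0 2 1 f = 0 ∧
    cf k 0 0 3 f = 0 ∧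
    cf k 2 0 0 f = 0 ∧
    cf k 1 1 0 f = 0 ∧
    cf k 1 0 1 f = 0 ∧
    cf k 0 2 0 f = 0 ∧
    cf k 0 1 1 f = 0 ∧
    cf k 0 0 2 f = 0 ∧
    cf k 1 0 0 f = 0 ∧
    cf k 0 1 0 f = 0 ∧
    cf k 0 0 1 f = 0 ∧
    cf k 0 0 0 f = 0

variable (k) in
/-- The `k`-linear map sending a power series to its normal form modulo `g3`, a combination of
the 22 standard monomials. -/
def normalForm : MvPowerSeries (Fin 3) k →ₗ[k] MvPowerSeries (Fin 3) k :=
    (cf k 4 1 0 + cf k 0 4 1 + cf k 1 0 4).smulRight (xx k ^ 4 * yy k) +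
    (cf k 3 0 1).smulRight (xx k ^ 3 * zz k) +
    (cf k 4 0 0 + cf k 0 3 1).smulRight (xx k ^ 4) +
    (cf k 3 1 0 + cf k 0 0 4).smulRight (xx k ^ 3 * yy k) +
    (cf k 1 0 3 + cf k 0 4 0).smulRight (xx k * zz k ^ 3) +
    (cf k 3 0 0).smulRight (xx k ^ 3) +
    (cf k 2 1 0).smulRight (xx k ^ 2 * yy k) +
    (cf k 2 0 1).smulRight (xx k ^ 2 * zz k) +
    (cf k 1 0 2).smulRight (xx k * zz k ^ 2) +
    (cf k 0 3 0).smulRight (yy k ^ 3) +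
    (cf k 0 2 1).smulRight (yy k ^ 2 * zz k) +
    (cf k 0 0 3).smulRight (zz k ^ 3) +
    (cf k 2 0 0).smulRight (xx k ^ 2) +
    (cf k 1 1 0).smulRight (xx k * yy k) +
    (cf k 1 0 1).smulRight (xx k * zz k) +
    (cf k 0 2 0).smulRight (yy k ^ 2) +
    (cf k 0 1 1).smulRight (yy k * zz k) +
    (cf k 0 0 2).smulRight (zz k ^ 2) +
    (cf k 1 0 0).smulRight (xx k) +
    (cf k 0 1 0).smulRight (yy k) +
    (cf k 0 0 1).smulRight (zz k) +
    (cf k 0 0 0).smulRight (1)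

theorem normalForm_of_vanish {f : MvPowerSeries (Fin 3) k} (h : Vanish f) :
    normalForm k f = 0 := by
  simp only [Vanish] at h
  simp [normalForm, h]

theorem vanish_of_mem {f : MvPowerSeries (Fin 3) k} (hf : f ∈ Ig3 k) : Vanish f := by
  -- The conditions must be carried along for all multiples, to pass through scalar multiplication.
  suffices h : ∀ g, Vanish (g * f) by simpa using h 1
  refine Submodule.span_induction (p := fun f _ => ∀ g, Vanish (g * f)) ?_ ?_ ?_ ?_ hf
  · intro f hf g
    simp only [Set.mem_insert_iff, Set.mem_singleton_iff] at hf
    rw [mul_comm]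
    rcases hf with rfl | rfl | rfl | rfl | rfl | rfl | rfl <;>
      simp [Vanish, pow_succ, mul_assoc, sub_mul]
  · intro g
    simp [Vanish]
  · intro a b _ _ ha hb g
    have ha := ha g
    have hb := hb g
    simp only [Vanish, mul_add, map_add] at ha hb ⊢
    grind
  · intro a f _ hf g
    simpa [mul_assoc] using hf (g * a)

/-! ### Reduction to normal form -/

theorem sub_normalForm_mem_of_congr {u v : MvPowerSeries (Fin 3) k}
    (h : Ideal.Quotient.mk (Ig3 k) u = Ideal.Quotient.mk (Ig3 k) v)
    (hv : v - normalForm k v ∈ Ig3 k) : u - normalForm k u ∈ Ig3 k := by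
  rw [Ideal.Quotient.eq] at h
  have h0 := normalForm_of_vanish (vanish_of_mem h)
  rw [map_sub, sub_eq_zero] at h0
  rw [h0]
  simpa using add_mem h hv

/-- All the multiples of `m` are congruent to their normal forms modulo `g3`. -/
def Good (m : MvPowerSeries (Fin 3) k) : Prop :=
  ∀ r, m * r - normalForm k (m * r) ∈ Ig3 k

/-- The descending induction step: `m` inherits the property `Good` from the standard monomials
(or zero) congruent to `x m`, `y m` and `z m`. -/
theorem Good.step {m mx my mz : MvPowerSeries (Fin 3) k} (hx : Good mx) (hy : Good my)
    (hz : Good mz) (hm : normalForm k (m * 1) = m)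
    (ex : Ideal.Quotient.mk (Ig3 k) (xx k * m) = Ideal.Quotient.mk (Ig3 k) mx)
    (ey : Ideal.Quotient.mk (Ig3 k) (yy k * m) = Ideal.Quotient.mk (Ig3 k) my)
    (ez : Ideal.Quotient.mk (Ig3 k) (zz k * m) = Ideal.Quotient.mk (Ig3 k) mz) : Good m := by
  intro r
  obtain ⟨c, a, b, d, rfl⟩ := exists_decomp r
  have h1 := sub_normalForm_mem_of_congr (u := xx k * m * a) (by rw [map_mul, ex, map_mul]) (hx a)
  have h2 := sub_normalForm_mem_of_congr (u := yy k * m * b) (by rw [map_mul, ey, map_mul]) (hy b)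
  have h3 := sub_normalForm_mem_of_congr (u := zz k * m * d) (by rw [map_mul, ez, map_mul]) (hz d)
  have e : m * (c • 1 + xx k * a + yy k * b + zz k * d) =
      c • m + xx k * m * a + yy k * m * b + zz k * m * d := by
    rw [mul_add, mul_add, mul_add, mul_smul_comm, mul_one]
    ring
  rw [mul_one] at hm
  rw [e, map_add, map_add, map_add, map_smul, hm]
  convert add_mem (add_mem h1 h2) h3 using 1
  ring

/-- The defining relations of the quotient ring. -/
theorem quotient_relations : ∀ f ∈ ({xx k * yy k ^ 2, xx k * yy k * zz k, yy k * zz k ^ 2,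
    xx k ^ 4 - yy k ^ 3 * zz k, xx k * zz k ^ 3 - yy k ^ 4, xx k ^ 3 * yy k - zz k ^ 4,
    xx k ^ 2 * zz k ^ 2} : Set (MvPowerSeries (Fin 3) k)), Ideal.Quotient.mk (Ig3 k) f = 0 :=
  fun _ hf => Ideal.Quotient.eq_zero_iff_mem.2 (Ideal.subset_span hf)

theorem good_zero : Good (0 : MvPowerSeries (Fin 3) k) := fun r => by simp

/-- The lemmas `good_deg_*` treat the standard monomials degree by degree, from five down to zero.
Here `simp` evaluates the normal forms of the monomials, and `grind` derives from the defining
relations the products with variables that are not plain rewritings. -/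
theorem good_deg_five :
    Good (xx k ^ 4 * yy k : MvPowerSeries (Fin 3) k) := by
  have m0 := good_zero (k := k)
  have rel := quotient_relations (k := k)
  simp only [Set.mem_insert_iff, Set.mem_singleton_iff, forall_eq_or_imp, forall_eq, map_sub,
    map_mul, map_pow] at rel
  refine .step m0 m0 m0 ?_ ?_ ?_ ?_
  all_goals first
    | simp [normalForm, pow_succ, mul_assoc, -mul_one]; done
    | simp only [map_mul, map_pow, map_zero]; grind

theorem good_deg_four :
    Good (xx k ^ 3 * zz k : MvPowerSeries (Fin 3) k) ∧ Good (xx k ^ 4) ∧ Good (xx k ^ 3 * yy k) ∧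
      Good (xx k * zz k ^ 3) := by
  have m0 := good_zero (k := k)
  have m410 := good_deg_five (k := k)
  have rel := quotient_relations (k := k)
  simp only [Set.mem_insert_iff, Set.mem_singleton_iff, forall_eq_or_imp, forall_eq, map_sub,
    map_mul, map_pow] at rel
  refine ⟨.step m0 m0 m0 ?_ ?_ ?_ ?_,
    .step m0 m410 m0 ?_ ?_ ?_ ?_,
    .step m410 m0 m0 ?_ ?_ ?_ ?_,
    .step m0 m0 m410 ?_ ?_ ?_ ?_⟩
  all_goals first
    | simp [normalForm, pow_succ, mul_assoc, -mul_one]; done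
    | simp only [map_mul, map_pow, map_zero]; grind

set_option maxHeartbeats 2000000 in
theorem good_deg_three :
    Good (xx k ^ 3 : MvPowerSeries (Fin 3) k) ∧ Good (xx k ^ 2 * yy k) ∧ Good (xx k ^ 2 * zz k) ∧
      Good (xx k * zz k ^ 2) ∧ Good (yy k ^ 3) ∧ Good (yy k ^ 2 * zz k) ∧ Good (zz k ^ 3) := by
  have m0 := good_zero (k := k)
  obtain ⟨m301, m400, m310, m103⟩ := good_deg_four (k := k)
  have rel := quotient_relations (k := k)
  simp only [Set.mem_insert_iff, Set.mem_singleton_iff, forall_eq_or_imp, forall_eq, map_sub,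
    map_mul, map_pow] at rel
  refine ⟨.step m400 m310 m301 ?_ ?_ ?_ ?_,
    .step m310 m0 m0 ?_ ?_ ?_ ?_,
    .step m301 m0 m0 ?_ ?_ ?_ ?_,
    .step m0 m0 m103 ?_ ?_ ?_ ?_,
    .step m0 m103 m400 ?_ ?_ ?_ ?_,
    .step m0 m400 m0 ?_ ?_ ?_ ?_,
    .step m103 m0 m310 ?_ ?_ ?_ ?_⟩
  all_goals first
    | simp [normalForm, pow_succ, mul_assoc, -mul_one]; done
    | simp only [map_mul, map_pow, map_zero]; grind

theorem good_deg_two :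
    Good (xx k ^ 2 : MvPowerSeries (Fin 3) k) ∧ Good (xx k * yy k) ∧ Good (xx k * zz k) ∧
      Good (yy k ^ 2) ∧ Good (yy k * zz k) ∧ Good (zz k ^ 2) := by
  have m0 := good_zero (k := k)
  obtain ⟨m300, m210, m201, m102, m030, m021, m003⟩ := good_deg_three (k := k)
  have rel := quotient_relations (k := k)
  simp only [Set.mem_insert_iff, Set.mem_singleton_iff, forall_eq_or_imp, forall_eq, map_sub,
    map_mul, map_pow] at rel
  refine ⟨.step m300 m210 m201 ?_ ?_ ?_ ?_,
    .step m210 m0 m0 ?_ ?_ ?_ ?_,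
    .step m201 m0 m102 ?_ ?_ ?_ ?_,
    .step m0 m030 m021 ?_ ?_ ?_ ?_,
    .step m0 m021 m0 ?_ ?_ ?_ ?_,
    .step m102 m0 m003 ?_ ?_ ?_ ?_⟩
  all_goals first
    | simp [normalForm, pow_succ, mul_assoc, -mul_one]; done
    | simp only [map_mul, map_pow, map_zero]; grind

theorem good_deg_one :
    Good (xx k : MvPowerSeries (Fin 3) k) ∧ Good (yy k) ∧ Good (zz k) := by
  obtain ⟨m200, m110, m101, m020, m011, m002⟩ := good_deg_two (k := k)
  have rel := quotient_relations (k := k)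
  simp only [Set.mem_insert_iff, Set.mem_singleton_iff, forall_eq_or_imp, forall_eq, map_sub,
    map_mul, map_pow] at rel
  refine ⟨.step m200 m110 m101 ?_ ?_ ?_ ?_,
    .step m110 m020 m011 ?_ ?_ ?_ ?_,
    .step m101 m011 m002 ?_ ?_ ?_ ?_⟩
  all_goals first
    | simp [normalForm, pow_succ, mul_assoc, -mul_one]; done
    | simp only [map_mul, map_pow, map_zero]; grind

theorem good_deg_zero :
    Good (1 : MvPowerSeries (Fin 3) k) := by
  obtain ⟨m100, m010, m001⟩ := good_deg_one (k := k)
  refine .step m100 m010 m001 ?_ ?_ ?_ ?_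
  all_goals simp [normalForm]

theorem sub_normalForm_mem (f : MvPowerSeries (Fin 3) k) : f - normalForm k f ∈ Ig3 k := by
  simpa using good_deg_zero (k := k) f

theorem mem_Ig3_iff {f : MvPowerSeries (Fin 3) k} : f ∈ Ig3 k ↔ Vanish f := by
  refine ⟨vanish_of_mem, fun h => ?_⟩
  simpa [normalForm_of_vanish h] using sub_normalForm_mem f

/-! ### The socle -/

theorem mk_mem_socle_iff {f : MvPowerSeries (Fin 3) k} :
    Ideal.Quotient.mk (Ig3 k) f ∈ (⊥ : Ideal (MvPowerSeries (Fin 3) k ⧸ Ig3 k)).colon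
        (Ideal.map (Ideal.Quotient.mk (Ig3 k)) (Ideal.span {xx k, yy k, zz k})) ↔
      Vanish (xx k * f) ∧ Vanish (yy k * f) ∧ Vanish (zz k * f) := by
  rw [Ideal.map_span, Submodule.mem_colon_iff_le]
  simp only [← mem_Ig3_iff, ← Ideal.Quotient.eq_zero_iff_mem, map_mul]
  constructor
  · intro h
    have key (g) (hg : g ∈ ({xx k, yy k, zz k} : Set (MvPowerSeries (Fin 3) k))) :
        Ideal.Quotient.mk (Ig3 k) g * Ideal.Quotient.mk (Ig3 k) f = 0 := by
      have := h (Submodule.smul_mem_pointwise_smul _ (Ideal.Quotient.mk (Ig3 k) f) _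
        (Ideal.subset_span (Set.mem_image_of_mem _ hg)))
      rwa [smul_eq_mul, mul_comm] at this
    exact ⟨key _ (by simp), key _ (by simp), key _ (by simp)⟩
  · rintro ⟨h1, h2, h3⟩ _ ⟨g, hg, rfl⟩
    change Ideal.Quotient.mk (Ig3 k) f * g = 0
    refine Submodule.span_induction (p := fun g _ => Ideal.Quotient.mk (Ig3 k) f * g = 0)
      ?_ (mul_zero _) (fun a b _ _ ha hb => by rw [mul_add, ha, hb, add_zero])
      (fun a b _ hb => by rw [smul_eq_mul, mul_left_comm, hb, mul_zero]) hg
    rintro _ ⟨g, hg, rfl⟩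
    rw [mul_comm]
    simp only [Set.mem_insert_iff, Set.mem_singleton_iff] at hg
    rcases hg with rfl | rfl | rfl <;> assumption

/-- A power series representing a socle element is congruent to a combination of `x⁴y` and `x³z`.
The coefficient of `x⁴y` is the sum over the three monomials `x⁴y`, `y⁴z`, `xz⁴`, which agree
modulo `g3`. -/
theorem socle_normal_form {f : MvPowerSeries (Fin 3) k}
    (hx : Vanish (xx k * f)) (hy : Vanish (yy k * f)) (hz : Vanish (zz k * f)) :
    f - ((cf k 4 1 0 f + cf k 0 4 1 f + cf k 1 0 4 f) • (xx k ^ 4 * yy k * 1) +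
      cf k 3 0 1 f • (xx k ^ 3 * zz k * 1)) ∈ Ig3 k := by
  rw [mem_Ig3_iff]
  simp [Vanish] at hx hy hz
  simp [Vanish, pow_succ, mul_assoc, -mul_one, hx, hy, hz]
  exact ⟨by ring, by ring, by linear_combination hz.1⟩

/-- Over `k`, the socle is spanned by the images of `x⁴y` and `x³z`. -/
theorem exists_smul_of_mem_socle {r : MvPowerSeries (Fin 3) k ⧸ Ig3 k}
    (hr : r ∈ (⊥ : Ideal (MvPowerSeries (Fin 3) k ⧸ Ig3 k)).colon
        (Ideal.map (Ideal.Quotient.mk (Ig3 k)) (Ideal.span {xx k, yy k, zz k}))) :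
    ∃ a b : k, a • Ideal.Quotient.mk (Ig3 k) (xx k ^ 4 * yy k) +
      b • Ideal.Quotient.mk (Ig3 k) (xx k ^ 3 * zz k) = r := by
  obtain ⟨f, rfl⟩ := Ideal.Quotient.mk_surjective r
  obtain ⟨hx, hy, hz⟩ := mk_mem_socle_iff.1 hr
  have h := socle_normal_form hx hy hz
  rw [mul_one, mul_one] at h
  exact ⟨_, _, (Ideal.Quotient.eq.2 h).symm⟩

theorem socle_generators_mem :
    Ideal.Quotient.mk (Ig3 k) (xx k ^ 4 * yy k) ∈
        (⊥ : Ideal (MvPowerSeries (Fin 3) k ⧸ Ig3 k)).colon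
          (Ideal.map (Ideal.Quotient.mk (Ig3 k)) (Ideal.span {xx k, yy k, zz k})) ∧
      Ideal.Quotient.mk (Ig3 k) (xx k ^ 3 * zz k) ∈
        (⊥ : Ideal (MvPowerSeries (Fin 3) k ⧸ Ig3 k)).colon
          (Ideal.map (Ideal.Quotient.mk (Ig3 k)) (Ideal.span {xx k, yy k, zz k})) := by
  -- The trailing factor `1` gives the monomials the shape on which the rules for `cf` act.
  rw [← mul_one (xx k ^ 4 * yy k), ← mul_one (xx k ^ 3 * zz k), mk_mem_socle_iff,
    mk_mem_socle_iff]
  simp [Vanish, pow_succ, mul_assoc, -mul_one]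

theorem linearIndependent_socle_generators :
    LinearIndependent k ![Ideal.Quotient.mk (Ig3 k) (xx k ^ 4 * yy k),
      Ideal.Quotient.mk (Ig3 k) (xx k ^ 3 * zz k)] := by
  rw [LinearIndependent.pair_iff]
  intro a b h
  have h' : a • (xx k ^ 4 * yy k * 1) + b • (xx k ^ 3 * zz k * 1) ∈ Ig3 k := by
    rw [mul_one, mul_one]
    exact Ideal.Quotient.eq_zero_iff_mem.1 h
  rw [mem_Ig3_iff] at h'
  simpa [Vanish, pow_succ, mul_assoc, -mul_one, -smul_eq_mul, -mul_eq_zero] using h'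

end

/-- The socle `(0 :_R m)` of `R = Q/g3`. -/
theorem socle_g3 (k : Type*) [Field k] :
    (⊥ : Ideal (MvPowerSeries (Fin 3) k ⧸ Ig3 k)).colon
        (Ideal.map (Ideal.Quotient.mk (Ig3 k)) (Ideal.span {xx k, yy k, zz k}))
      = Ideal.span {Ideal.Quotient.mk (Ig3 k) (xx k ^ 4 * yy k), Ideal.Quotient.mk (Ig3 k) (xx k ^ 3 * zz k)} ∧
    Module.finrank k (Submodule.restrictScalars k
      ((⊥ : Ideal (MvPowerSeries (Fin 3) k ⧸ Ig3 k)).colon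
        (Ideal.map (Ideal.Quotient.mk (Ig3 k)) (Ideal.span {xx k, yy k, zz k})))) = 2 := by
  have hmem := socle_generators_mem (k := k)
  constructor
  · apply le_antisymm
    · intro r hr
      obtain ⟨a, b, rfl⟩ := exists_smul_of_mem_socle hr
      exact add_mem (Submodule.smul_of_tower_mem _ a (Ideal.subset_span (by simp)))
        (Submodule.smul_of_tower_mem _ b (Ideal.subset_span (by simp)))
    · rw [Ideal.span_le]
      rintro _ (rfl | rfl)
      exacts [hmem.1, hmem.2]
  · have h := finrank_span_eq_card (linearIndependent_socle_generators (k := k))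
    rw [Fintype.card_fin] at h
    refine Eq.trans (congrArg (fun S : Submodule k (MvPowerSeries (Fin 3) k ⧸ Ig3 k) =>
      Module.finrank k S) ?_) h
    ext r
    rw [Submodule.restrictScalars_mem, Matrix.range_cons, Matrix.range_cons, Matrix.range_empty,
      Set.union_empty, Set.singleton_union, Submodule.mem_span_pair]
    refine ⟨exists_smul_of_mem_socle, ?_⟩
    rintro ⟨a, b, rfl⟩
    exact add_mem (Submodule.smul_of_tower_mem _ a hmem.1)
      (Submodule.smul_of_tower_mem _ b hmem.2)
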